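/- arXiv:0810.5647 — 3 statements merged into one kernel-verified Lean document; each statement's English description precedes it below -/
import Mathlib

section
/- Let D_A ∈ K[X_1,…,X_{2n−1}] be the determinant of the generic n×n Hankel matrix whose (i,j) entry is the variable X_{i+j−1}. Then for every point (h_1,…,h_{2n−1}) ∈ K^{2n−1} and every 1 ≤ k ≤ 2n−1, the formal partial derivative ∂D_A/∂X_k evaluated at that point equals σ_{k−1}(H_A*), the sum of the entries of the adjugate H_A* of the matrix H_A = (h_{i+j−1}) lying on the (k−1)-st anti-diagonal. -/
open Matrix

/-- The `k`-th anti-diagonal sum of an `n × n` matrix `M` (0-based indexing):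
`σ_k(M) = Σ_{i+j=k} M i j`. -/
def antiDiagSum {K : Type*} [CommRing K] {n : ℕ} (M : Matrix (Fin n) (Fin n) K)
    (k : ℕ) : K :=
  ∑ i : Fin n, ∑ j : Fin n, if (i : ℕ) + (j : ℕ) = k then M i j else 0

/-!
Jacobi's formula `D (det M) = ∑ i j, (adj M) i j • D (M j i)` holds for every derivation `D`,
because the cofactor `(adj M) i j` collects exactly those terms of the Leibniz expansion of
`det M` that contain the factor `M j i`, with that factor removed. For a matrix of variables,
`∂/∂X_k` takes the value `1` at the positions carrying `X_k` and `0` elsewhere. In the generic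
Hankel matrix these positions form an anti-diagonal, which is stable under transposition.
-/

section Jacobi

variable {R A N n : Type*} [CommSemiring R] [Fintype n] [DecidableEq n]

theorem derivation_prod {ι : Type*} [CommSemiring A] [Algebra R A] [AddCommMonoid N] [Module A N]
    [Module R N] [DecidableEq ι] (D : Derivation R A N) (s : Finset ι) (f : ι → A) :
    D (∏ i ∈ s, f i) = ∑ i ∈ s, (∏ j ∈ s.erase i, f j) • D (f i) := by
  induction s using Finset.induction_on with
  | empty => simp
  | insert a s ha ih =>
    rw [Finset.prod_insert ha, D.leibniz, ih, Finset.sum_insert ha, Finset.erase_insert ha,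
      add_comm, Finset.smul_sum]
    congr 1
    refine Finset.sum_congr rfl fun i hi => ?_
    have hai : a ≠ i := fun h => ha (h ▸ hi)
    rw [Finset.erase_insert_of_ne hai,
      Finset.prod_insert (fun h => ha (Finset.mem_of_mem_erase h)), mul_smul]

variable [CommRing A]

theorem adjugate_apply_eq_sum_perm (M : Matrix n n A) (i j : n) :
    M.adjugate i j = ∑ σ : Equiv.Perm n,
      if σ i = j then Equiv.Perm.sign σ • ∏ l ∈ Finset.univ.erase i, M (σ l) l else 0 := by
  have adjugate_eq_det : M.adjugate i j = (M.updateCol i (Pi.single j 1)).det := by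
    rw [← cramer_apply, cramer_eq_adjugate_mulVec, mulVec_single_one, col_apply]
  rw [adjugate_eq_det, det_apply]
  refine Finset.sum_congr rfl fun σ _ => ?_
  have prod_off_col : ∏ l ∈ Finset.univ.erase i, M.updateCol i (Pi.single j 1) (σ l) l =
      ∏ l ∈ Finset.univ.erase i, M (σ l) l :=
    Finset.prod_congr rfl fun l hl => updateCol_ne (Finset.ne_of_mem_erase hl)
  rw [← Finset.prod_erase_mul _ _ (Finset.mem_univ i), prod_off_col, updateCol_self,
    Pi.single_apply, mul_ite, mul_one, mul_zero, smul_ite, smul_zero]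

theorem derivation_det [Algebra R A] [AddCommGroup N] [Module A N] [Module R N]
    (D : Derivation R A N) (M : Matrix n n A) :
    D M.det = ∑ i, ∑ j, M.adjugate i j • D (M j i) := by
  have derivation_term (σ : Equiv.Perm n) :
      D (Equiv.Perm.sign σ • ∏ i, M (σ i) i) =
        ∑ i, (Equiv.Perm.sign σ • ∏ l ∈ Finset.univ.erase i, M (σ l) l) • D (M (σ i) i) := by
    simp only [Units.smul_def, map_zsmul, derivation_prod, Finset.smul_sum, smul_assoc]
  have adjugate_row (i : n) :
      ∑ j, M.adjugate i j • D (M j i) = ∑ σ : Equiv.Perm n,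
        (Equiv.Perm.sign σ • ∏ l ∈ Finset.univ.erase i, M (σ l) l) • D (M (σ i) i) := by
    simp only [adjugate_apply_eq_sum_perm, Finset.sum_smul, ite_smul, zero_smul]
    rw [Finset.sum_comm]
    simp only [Finset.sum_ite_eq, Finset.mem_univ, if_true]
  simp only [det_apply, map_sum, derivation_term, adjugate_row]
  exact Finset.sum_comm

end Jacobi

theorem eval_pderiv_det_of_X {R n τ : Type*} [CommRing R] [Fintype n] [DecidableEq n]
    [DecidableEq τ] (v : n → n → τ) (h : τ → R) (t : τ) :
    MvPolynomial.eval h (MvPolynomial.pderiv t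
      (of fun i j => (MvPolynomial.X (v i j) : MvPolynomial τ R)).det) =
    ∑ i, ∑ j, if v j i = t then (of fun i j => h (v i j)).adjugate i j else 0 := by
  have map_adjugate_of_X (i j : n) :
      MvPolynomial.eval h
        ((of fun i j => (MvPolynomial.X (v i j) : MvPolynomial τ R)).adjugate i j) =
      (of fun i j => h (v i j)).adjugate i j := by
    rw [← map_apply (f := MvPolynomial.eval h), ← RingHom.mapMatrix_apply, RingHom.map_adjugate]
    congr 2
    ext i j
    exact MvPolynomial.eval_X _
  simp only [derivation_det, map_sum, smul_eq_mul, map_adjugate_of_X, of_apply,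
    MvPolynomial.pderiv_X, Pi.single_apply, apply_ite (MvPolynomial.eval h), map_zero,
    mul_ite, mul_one, mul_zero]

theorem pderiv_shifted_hankel_det_eq_antiDiagSum_adjugate_general {R : Type*} [CommRing R] {n : ℕ}
    (h : ℕ → R) (k : ℕ) (hk : 1 ≤ k) (HA : Matrix (Fin n) (Fin n) R)
    (hHA : ∀ i j, HA i j = h ((i : ℕ) + (j : ℕ) + 1)) :
    MvPolynomial.eval h
      (MvPolynomial.pderiv k
        (Matrix.det (Matrix.of fun i j : Fin n =>
          (MvPolynomial.X ((i : ℕ) + (j : ℕ) + 1) : MvPolynomial ℕ R))))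
    = antiDiagSum HA.adjugate (k - 1) := by
  have HA_eq : HA = of fun i j : Fin n => h ((i : ℕ) + (j : ℕ) + 1) := Matrix.ext hHA
  have mem_antiDiag_iff (i j : Fin n) :
      (j : ℕ) + (i : ℕ) + 1 = k ↔ (i : ℕ) + (j : ℕ) = k - 1 := by omega
  rw [eval_pderiv_det_of_X, ← HA_eq, antiDiagSum]
  simp only [mem_antiDiag_iff]

/-- Let `D_A` be the determinant of the generic `n × n` Hankel matrix whose
`(i,j)` entry is the variable `X_{i+j-1}` (0-based: `X_{i+j+1}`).  For every point
`(h_1, …, h_{2n-1})` and every `1 ≤ k ≤ 2n-1`, the formal partial derivative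
`∂D_A/∂X_k` evaluated at that point equals `σ_{k-1}(H_A*)`, the `(k-1)`-st
anti-diagonal sum of the adjugate of the matrix `H_A = (h_{i+j-1})`. -/
theorem pderiv_shifted_hankel_det_eq_antiDiagSum_adjugate {K : Type*} [Field K] {n : ℕ}
    (hn : 1 ≤ n) (h : ℕ → K) (k : ℕ) (hk1 : 1 ≤ k) (hk2 : k ≤ 2 * n - 1)
    (HA : Matrix (Fin n) (Fin n) K)
    (hHA : ∀ i j, HA i j = h ((i : ℕ) + (j : ℕ) + 1)) :
    MvPolynomial.eval h
      (MvPolynomial.pderiv k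
        (Matrix.det (Matrix.of fun i j : Fin n =>
          (MvPolynomial.X ((i : ℕ) + (j : ℕ) + 1) : MvPolynomial ℕ K))))
    = antiDiagSum HA.adjugate (k - 1) :=
  pderiv_shifted_hankel_det_eq_antiDiagSum_adjugate_general h k hk1 HA hHA
end

section
/- Let l_0,…,l_{n−1} and r_0,…,r_{n−1} be elements of K, let L be the n×n lower-left triangular Hankel matrix with L_{ij} = l_{i+j−2} when i+j−2 ≤ n−1 and L_{ij} = 0 otherwise, and let R be the n×n upper triangular Toeplitz matrix with R_{ij} = r_{j−i} when j ≥ i and R_{ij} = 0 otherwise. Then for every 0 ≤ k ≤ n−1, the k-th anti-diagonal sum of the product satisfies σ_k(LR) = Σ_{s=0}^{k} (s+1)·l_s·r_{k−s}; equivalently, Σ_{k=0}^{n−1} σ_k(LR)·x^k is the truncation modulo x^n of the product (Σ_{s=0}^{n−1} l_s x^{s+1})′ · (Σ_{s=0}^{n−1} r_s x^s), where ′ denotes formal differentiation. -/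
open Matrix Polynomial

/-!
For `i + j = k < n`, the substitution `s = i + m` turns the `(i, j)` entry `∑ m, L i m * R m j` of
the product into the sum of `l s * r (k - s)` over `i ≤ s ≤ k`, so a given `s` is met by the `s + 1`
entries `i = 0, …, s` of the anti-diagonal. The same multiplicity `s + 1` is the exponent brought
down by differentiating `x ^ (s + 1)`.
-/

open Finset.HasAntidiagonal (antidiagonal mem_antidiagonal)

/-- The `n × n` lower-left triangular Hankel matrix: the left factor `L` of the theorem, with
`l 0` in the top left corner, `l (n - 1)` along the main anti-diagonal and zeros below it. Indices
are 0-based; the subtraction `n - 1` does not truncate once there is an index. -/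
def trilHankel {K : Type*} [Zero K] (n : ℕ) (l : ℕ → K) : Matrix (Fin n) (Fin n) K :=
  .of fun i j => if (i : ℕ) + (j : ℕ) ≤ n - 1 then l ((i : ℕ) + (j : ℕ)) else 0

/-- The `n × n` upper triangular Toeplitz matrix: the right factor `R` of the theorem, with `r 0`
along the main diagonal and zeros below it. -/
def triuToeplitz {K : Type*} [Zero K] (n : ℕ) (r : ℕ → K) : Matrix (Fin n) (Fin n) K :=
  .of fun i j => if (i : ℕ) ≤ (j : ℕ) then r ((j : ℕ) - (i : ℕ)) else 0

theorem trilHankel_mul_triuToeplitz_apply {K : Type*} [NonUnitalNonAssocSemiring K] {n : ℕ}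
    (l r : ℕ → K) {i j : Fin n} (hij : (i : ℕ) + (j : ℕ) < n) :
    (trilHankel n l * triuToeplitz n r) i j =
      ∑ s ∈ Finset.Ico (i : ℕ) (i + j + 1), l s * r (i + j - s) := by
  have entry_mul_entry (m : Fin n) : trilHankel n l i m * triuToeplitz n r m j =
      if (m : ℕ) ∈ Finset.range (j + 1) then l (i + m) * r (j - m) else 0 := by
    by_cases hm : (m : ℕ) ≤ j
    · simp only [trilHankel, triuToeplitz, of_apply, if_pos hm, Finset.mem_range_succ_iff,
        if_pos (show (i : ℕ) + m ≤ n - 1 by omega)]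
    · simp only [triuToeplitz, of_apply, if_neg hm, Finset.mem_range_succ_iff, mul_zero]
  calc (trilHankel n l * triuToeplitz n r) i j
      = ∑ m ∈ Finset.range n,
          if m ∈ Finset.range (j + 1) then l (i + m) * r (j - m) else 0 := by
        rw [mul_apply, ← Fin.sum_univ_eq_sum_range]
        exact Finset.sum_congr rfl fun m _ => entry_mul_entry m
    _ = ∑ m ∈ Finset.range (j + 1), l (i + m) * r (j - m) := by
        rw [Finset.sum_ite_mem, Finset.inter_eq_right.2 (Finset.range_mono j.isLt)]
    _ = ∑ s ∈ Finset.Ico (i : ℕ) (i + j + 1), l s * r (i + j - s) := by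
        rw [Finset.sum_Ico_eq_sum_range, add_assoc, Nat.add_sub_cancel_left]
        simp only [Nat.add_sub_add_left]

theorem antiDiagSum_eq_sum_antidiagonal {K : Type*} [CommRing K] {n k : ℕ} (hk : k < n)
    {M : Matrix (Fin n) (Fin n) K} {f : ℕ → ℕ → K}
    (hM : ∀ i j : Fin n, (i : ℕ) + (j : ℕ) = k → M i j = f i j) :
    antiDiagSum M k = ∑ p ∈ antidiagonal k, f p.1 p.2 := by
  rw [antiDiagSum, ← Fintype.sum_prod_type', ← Finset.sum_filter]
  refine Finset.sum_bij (fun p _ => ((p.1 : ℕ), (p.2 : ℕ))) ?_ ?_ ?_ ?_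
  · simp
  · simp [Prod.ext_iff, Fin.ext_iff]
  · rintro ⟨i, j⟩ hij
    rw [mem_antidiagonal] at hij
    exact ⟨(⟨i, by omega⟩, ⟨j, by omega⟩), by simpa using hij, rfl⟩
  · simpa using hM

theorem sum_range_sum_Ico_eq_sum_succ_nsmul {A : Type*} [AddCommMonoid A] (n : ℕ) (g : ℕ → A) :
    ∑ i ∈ Finset.range n, ∑ s ∈ Finset.Ico i n, g s =
      ∑ s ∈ Finset.range n, (s + 1) • g s := by
  rw [Finset.range_eq_Ico, Finset.sum_Ico_Ico_comm]
  simp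

theorem antiDiagSum_trilHankel_mul_triuToeplitz {K : Type*} [CommRing K] {n k : ℕ}
    (hk : k < n) (l r : ℕ → K) :
    antiDiagSum (trilHankel n l * triuToeplitz n r) k =
      ∑ s ∈ Finset.range (k + 1), ((s + 1 : ℕ) : K) * l s * r (k - s) := by
  calc antiDiagSum (trilHankel n l * triuToeplitz n r) k
      = ∑ p ∈ antidiagonal k, ∑ s ∈ Finset.Ico p.1 (k + 1), l s * r (k - s) := by
        refine antiDiagSum_eq_sum_antidiagonal hk
          (f := fun i _ => ∑ s ∈ Finset.Ico i (k + 1), l s * r (k - s)) fun i j hij => ?_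
        rw [trilHankel_mul_triuToeplitz_apply l r (hij ▸ hk), hij]
    _ = ∑ i ∈ Finset.range (k + 1), ∑ s ∈ Finset.Ico i (k + 1), l s * r (k - s) :=
        Finset.Nat.sum_antidiagonal_eq_sum_range_succ_mk _ _
    _ = ∑ s ∈ Finset.range (k + 1), ((s + 1 : ℕ) : K) * l s * r (k - s) := by
        simp only [sum_range_sum_Ico_eq_sum_succ_nsmul, nsmul_eq_mul, mul_assoc]

theorem coeff_sum_range_C_mul_X_pow {S : Type*} [Semiring S] {n k : ℕ} (hk : k < n)
    (a : ℕ → S) : (∑ s ∈ Finset.range n, C (a s) * X ^ s).coeff k = a k := by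
  simp [hk]

theorem coeff_derivative_sum_range_C_mul_X_pow_succ {S : Type*} [Semiring S] {n k : ℕ}
    (hk : k < n) (a : ℕ → S) :
    (derivative (∑ s ∈ Finset.range n, C (a s) * X ^ (s + 1))).coeff k =
      ((k + 1 : ℕ) : S) * a k := by
  rw [coeff_derivative, ← Nat.cast_succ, ← Nat.cast_comm]
  simp [coeff_X_pow, hk]

theorem antiDiagSum_tril_hankel_mul_triu_toeplitz_low_general {K : Type*} [CommRing K] {n : ℕ}
    (l r : ℕ → K) :
    (∀ k : ℕ, k < n →
        antiDiagSum (trilHankel n l * triuToeplitz n r) k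
          = ∑ s ∈ Finset.range (k + 1), ((s + 1 : ℕ) : K) * l s * r (k - s)) ∧
      (∀ k : ℕ, k < n →
        (derivative (∑ s ∈ Finset.range n, C (l s) * X ^ (s + 1))
            * ∑ s ∈ Finset.range n, C (r s) * X ^ s).coeff k
          = antiDiagSum (trilHankel n l * triuToeplitz n r) k) := by
  refine ⟨fun k hk => antiDiagSum_trilHankel_mul_triuToeplitz hk l r, fun k hk => ?_⟩
  rw [antiDiagSum_trilHankel_mul_triuToeplitz hk, coeff_mul,
    Finset.Nat.sum_antidiagonal_eq_sum_range_succ_mk]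
  refine Finset.sum_congr rfl fun s hs => ?_
  have hsk : s < k + 1 := Finset.mem_range.1 hs
  rw [coeff_derivative_sum_range_C_mul_X_pow_succ (by omega),
    coeff_sum_range_C_mul_X_pow (by omega)]

/-- Let `L` be the lower-left triangular Hankel matrix with entries
`L_{ij} = l_{i+j-2}` for `i+j-2 ≤ n-1` and `0` otherwise, and `R` the upper triangular
Toeplitz matrix with entries `R_{ij} = r_{j-i}` for `j ≥ i` and `0` otherwise.  Then for
every `0 ≤ k ≤ n-1`, `σ_k(LR) = Σ_{s=0}^{k} (s+1)·l_s·r_{k-s}`; equivalently,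
`Σ_{k=0}^{n-1} σ_k(LR) x^k` is the truncation modulo `x^n` of
`(Σ_{s=0}^{n-1} l_s x^{s+1})' · (Σ_{s=0}^{n-1} r_s x^s)`. -/
theorem antiDiagSum_tril_hankel_mul_triu_toeplitz_low {K : Type*} [Field K] {n : ℕ}
    (hn : 1 ≤ n) (l r : ℕ → K)
    (L R : Matrix (Fin n) (Fin n) K)
    (hL : ∀ i j, L i j =
      if (i : ℕ) + (j : ℕ) ≤ n - 1 then l ((i : ℕ) + (j : ℕ)) else 0)
    (hR : ∀ i j, R i j = if (i : ℕ) ≤ (j : ℕ) then r ((j : ℕ) - (i : ℕ)) else 0) :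
    (∀ k : ℕ, k ≤ n - 1 →
        antiDiagSum (L * R) k
          = ∑ s ∈ Finset.range (k + 1), ((s + 1 : ℕ) : K) * l s * r (k - s)) ∧
      (∀ k : ℕ, k < n →
        (Polynomial.derivative
              (∑ s ∈ Finset.range n, Polynomial.C (l s) * Polynomial.X ^ (s + 1))
            * ∑ s ∈ Finset.range n, Polynomial.C (r s) * Polynomial.X ^ s).coeff k
          = antiDiagSum (L * R) k) := by
  obtain ⟨rfl, rfl⟩ : L = trilHankel n l ∧ R = triuToeplitz n r := ⟨Matrix.ext hL, Matrix.ext hR⟩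
  exact (antiDiagSum_tril_hankel_mul_triu_toeplitz_low_general l r).imp_left
    fun h k hk => h k (by omega)
end

section
/- Let R be a commutative ring, let n and r be integers with 2 ≤ r ≤ n+2, and let a, b, c ∈ R[z] with deg a + deg c ≤ r−1 and deg b ≤ n. Write b = b_H(z)·z^{n−r+2} + b_low(z) where b_low consists of the terms of b of degree < n−r+2, and set b_L = b_low(1) ∈ R (the sum of the coefficients of b of degree at most n−r+1). Then the evaluation at z = 1 of the truncation of a·b·c modulo z^{n+1} equals the evaluation at z = 1 of the truncation of a·b_H·c modulo z^{r−1}, plus b_L times a(1)·c(1); that is, (a(z)b(z)c(z) mod z^{n+1})(1) = (a(z)b_H(z)c(z) mod z^{r−1})(1) + (a(z)·b_L·c(z))(1). -/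
open Polynomial

/-!
Since `bLow` has degree below `k = n + 2 - r` and `a * c` has degree at most `m = r - 1`, the
product `a * bLow * c` has degree below `m + k = n + 1` and survives the truncation unchanged.
Reducing the remaining summand `a * bH * c * X ^ k` modulo `X ^ (m + k)` amounts to reducing
`a * bH * c` modulo `X ^ m`. Evaluating at `1` forgets the factor `X ^ k`.
-/

theorem degree_mul_lt_degree_mul {R : Type*} [Semiring R] {p q g h : R[X]}
    (hg : g ≠ 0) (hh : h.Monic) (hpg : p.degree ≤ g.degree) (hqh : q.degree < h.degree) :
    (p * q).degree < (g * h).degree :=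
  calc (p * q).degree
      ≤ p.degree + q.degree := degree_mul_le p q
    _ ≤ g.degree + q.degree := by gcongr
    _ < g.degree + h.degree := WithBot.add_lt_add_left (degree_ne_bot.2 hg) hqh
    _ = (g * h).degree := hh.degree_mul.symm

section CommRing

variable {R : Type*} [CommRing R]

theorem mul_modByMonic_mul_right (p : R[X]) {g h : R[X]} (hg : g.Monic) (hh : h.Monic) :
    (p * h) %ₘ (g * h) = (p %ₘ g) * h := by
  nontriviality R
  have hdiv : (p %ₘ g) * h + g * h * (p /ₘ g) = p * h := by
    linear_combination h * modByMonic_add_div p g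
  have hdeg : ((p %ₘ g) * h).degree < (g * h).degree := by
    rw [hh.degree_mul, hh.degree_mul]
    exact WithBot.add_lt_add_right (degree_ne_bot.2 hh.ne_zero) (degree_modByMonic_lt p hg)
  exact (div_modByMonic_unique _ _ (hg.mul hh) ⟨hdiv, hdeg⟩).2

theorem mul_add_modByMonic_mul {p q l g h : R[X]} (hg : g.Monic) (hh : h.Monic)
    (hp : p.degree ≤ g.degree) (hl : l.degree < h.degree) :
    (p * (q * h + l)) %ₘ (g * h) = ((p * q) %ₘ g) * h + p * l := by
  nontriviality R
  have hlow : (p * l) %ₘ (g * h) = p * l :=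
    (modByMonic_eq_self_iff (hg.mul hh)).2 (degree_mul_lt_degree_mul hg.ne_zero hh hp hl)
  rw [mul_add, ← mul_assoc, add_modByMonic, mul_modByMonic_mul_right _ hg hh, hlow]

theorem lazy_evaluation_split_general {m k : ℕ} {a c bH bLow : R[X]}
    (hac : (a * c).degree ≤ m) (hbLow : bLow.degree < k) (x : R) :
    ((a * (bH * X ^ k + bLow) * c) %ₘ X ^ (m + k)).eval x
      = ((a * bH * c) %ₘ X ^ m).eval x * x ^ k + bLow.eval x * (a.eval x * c.eval x) := by
  nontriviality R
  have hsplit := mul_add_modByMonic_mul (q := bH) (monic_X_pow m) (monic_X_pow k)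
    (hac.trans_eq (degree_X_pow m).symm) (hbLow.trans_eq (degree_X_pow k).symm)
  rw [mul_right_comm a _ c, mul_right_comm a bH c, pow_add, hsplit]
  simp only [eval_add, eval_mul, eval_pow, eval_X]
  ring

end CommRing

/-- Let `R` be a commutative ring, `2 ≤ r ≤ n + 2`, and
`a, b, c ∈ R[z]` with `deg a + deg c ≤ r - 1` and `deg b ≤ n`. Write
`b = b_H(z)·z^{n-r+2} + b_low(z)` with `deg b_low < n - r + 2`, and set
`b_L = b_low(1)`.  Then
`(a(z)·b(z)·c(z) mod z^{n+1})(1) = (a(z)·b_H(z)·c(z) mod z^{r-1})(1) + b_L·a(1)·c(1)`,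
where `p mod z^m` discards all terms of degree `≥ m`. -/
theorem lazy_evaluation_split {R : Type*} [CommRing R] (n r : ℕ)
    (hr2 : 2 ≤ r) (hrn : r ≤ n + 2)
    (a b c : Polynomial R)
    (hac : a.natDegree + c.natDegree ≤ r - 1)
    (hb : b.natDegree ≤ n)
    (bH bLow : Polynomial R)
    (hsplit : b = bH * Polynomial.X ^ (n + 2 - r) + bLow)
    (hbLow : bLow.degree < ((n + 2 - r : ℕ) : WithBot ℕ)) :
    ((a * b * c) %ₘ (Polynomial.X ^ (n + 1))).eval 1
      = ((a * bH * c) %ₘ (Polynomial.X ^ (r - 1))).eval 1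
        + bLow.eval 1 * (a.eval 1 * c.eval 1) := by
  have hac' : (a * c).degree ≤ ((r - 1 : ℕ) : WithBot ℕ) :=
    natDegree_le_iff_degree_le.1 (natDegree_mul_le.trans hac)
  have hn : n + 1 = (r - 1) + (n + 2 - r) := by omega
  simpa [hsplit, hn] using lazy_evaluation_split_general (bH := bH) hac' hbLow 1
end
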